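/- arXiv:2603.17344 — 5 statements merged into one kernel-verified Lean document; each statement's English description precedes it below -/
import Mathlib

section
/- Suppose Assumption 1 holds for a Borel probability measure P on ℝ^m with support the nonempty closed cone Ξ, negative log-density Q ∈ MRV(Ξ, q, λ), q ∈ RV(α), α > 0, and λ(θ) > 0 for all unit θ ∈ Ξ. Then for every open set O ⊆ ℝ^m, liminf_{u→∞} log P({z ∈ ℝ^m : z/u ∈ O}) / q(u) ≥ − inf{λ(w) : w ∈ O ∩ Ξ}, with the conventions log 0 = −∞ and inf ∅ = +∞. -/
open Filter Topology MeasureTheory Set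

noncomputable section

/-- Euclidean space `ℝ^d`. -/
abbrev Rn (d : ℕ) : Type := EuclideanSpace ℝ (Fin d)

/-- A set is a cone: closed under multiplication by positive scalars. -/
def IsPosCone {d : ℕ} (Z : Set (Rn d)) : Prop :=
  ∀ c : ℝ, 0 < c → ∀ z ∈ Z, c • z ∈ Z

/-- `f : (0,∞) → (0,∞)` is regularly varying with index `κ`:
`f(uz)/f(u) → z^κ` as `u → ∞`, for every `z > 0`. -/
def RegVary (f : ℝ → ℝ) (κ : ℝ) : Prop :=
  (∀ u : ℝ, 0 < u → 0 < f u) ∧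
  ∀ z : ℝ, 0 < z → Tendsto (fun u : ℝ => f (u * z) / f u) atTop (𝓝 (z ^ κ))

/-- `f ∈ MRV(Z, h, f*)` (multivariate regular variation on the cone `Z`), except
for the requirement `h ∈ RV(κ)` which is stated separately: `f, f* : Z → [0,∞)`,
`f*` continuous on `Z`, and `f(u • z_u)/h(u) → f*(z)` whenever `z_u → z` in `Z`. -/
def MultiRegVary {d : ℕ} (Z : Set (Rn d)) (f : Rn d → ℝ) (h : ℝ → ℝ)
    (fstar : Rn d → ℝ) : Prop :=
  (∀ z ∈ Z, 0 ≤ f z) ∧ (∀ z ∈ Z, 0 ≤ fstar z) ∧ ContinuousOn fstar Z ∧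
  ∀ z ∈ Z, ∀ zu : ℝ → Rn d, (∀ u : ℝ, 0 < u → zu u ∈ Z) →
    Tendsto zu atTop (𝓝 z) →
    Tendsto (fun u : ℝ => f (u • zu u) / h u) atTop (𝓝 (fstar z))

/-- Assumption 1: `P` is a Borel probability measure on `ℝ^m` whose support is the
nonempty closed cone `Ξ`, with density `exp (-Q z)` on `Ξ` (and `0` outside) w.r.t.
Lebesgue measure, `Q ∈ MRV(Ξ, q, lam)` with `q ∈ RV(α)`, `α > 0`, and `lam > 0`
on unit vectors of `Ξ`. -/
def Assumption1 {d : ℕ} (P : Measure (Rn d)) (Ξ : Set (Rn d))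
    (Q : Rn d → ℝ) (q : ℝ → ℝ) (lam : Rn d → ℝ) (α : ℝ) : Prop :=
  IsProbabilityMeasure P ∧
  Ξ.Nonempty ∧ IsClosed Ξ ∧ IsPosCone Ξ ∧
  -- Ξ is the support of P: the smallest closed set of full measure
  P Ξ = 1 ∧ (∀ C : Set (Rn d), IsClosed C → P C = 1 → Ξ ⊆ C) ∧
  -- density of P w.r.t. Lebesgue measure
  P = volume.withDensity
    (fun z => ENNReal.ofReal (Ξ.indicator (fun z' => Real.exp (-(Q z'))) z)) ∧
  0 < α ∧ RegVary q α ∧ MultiRegVary Ξ Q q lam ∧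
  (∀ z ∈ Ξ, ‖z‖ = 1 → 0 < lam z)

/-! Fix `w ∈ O ∩ Ξ` and `c > lam w`. Convergence along every curve `z_u → w` forces convergence
that is uniform near `w`, so on some neighbourhood `V ⊆ O` of `w` we have `Q (u • z) ≤ c * q u` for
all `z ∈ V ∩ Ξ` and all large `u`. Hence the density of `P` is at least `exp (-c * q u)` on
`u • (V ∩ Ξ)`, a set of volume `u ^ d * volume (V ∩ Ξ)`. Here `volume (V ∩ Ξ) > 0` because `w` lies
in the support of `P`, so the volume of `u • (V ∩ Ξ)` is eventually at least `1` (for `d = 0` it is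
that of the whole space, a unit point mass) and `P (u • O) ≥ exp (-c * q u)`. Take logarithms and
let `c` decrease to `lam w`. -/

open scoped ENNReal Pointwise

section CurveConvergence

variable {ι X Y : Type*}

lemma tendsto_extend_const_cofinite {α : Type*} (a : α → ι) {y : α → X} {x : X}
    {g : Filter X} (hx : pure x ≤ g) (hy : Tendsto y cofinite g) :
    Tendsto (Function.extend a y fun _ => x) cofinite g := by
  intro W hW
  refine ((hy hW).image a).subset fun u hu => ?_
  by_cases hrange : ∃ n, a n = u
  · exact ⟨hrange.choose, by simpa [Function.extend, hrange] using hu, hrange.choose_spec⟩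
  · exact absurd (hx hW) (by simpa [Function.extend_apply' _ _ _ hrange] using hu)

lemma tendsto_uncurry_prod_of_forall_curve [LinearOrder ι] [NoMaxOrder ι]
    [(atTop : Filter ι).IsCountablyGenerated] {g : Filter X} [g.IsCountablyGenerated] {x : X}
    (hx : pure x ≤ g) {F : ι → X → Y} {k : Filter Y}
    (hF : ∀ z : ι → X, Tendsto z atTop g → Tendsto (fun u => F u (z u)) atTop k) :
    Tendsto (Function.uncurry F) (atTop ×ˢ g) k := by
  refine tendsto_of_seq_tendsto fun p hp => tendsto_of_subseq_tendsto fun ns hns => ?_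
  obtain ⟨hfst, hsnd⟩ := tendsto_prod_iff'.1 (hp.comp hns)
  obtain ⟨φ, hφ, hmono⟩ := strictMono_subseq_of_tendsto_atTop hfst
  refine ⟨φ, ?_⟩
  -- Along a subsequence with distinct times, the sequence lies on the curve that takes its values
  -- at those times and the value `x` at all others.
  have hcurve := tendsto_extend_const_cofinite (fun n => (p (ns (φ n))).1) hx
    (Nat.cofinite_eq_atTop ▸ hsnd.comp hφ.tendsto_atTop)
  have hlim := (hF _ (hcurve.mono_left atTop_le_cofinite)).comp (hfst.comp hφ.tendsto_atTop)
  refine hlim.congr fun n => ?_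
  exact congrArg (F _) (hmono.injective.extend_apply _ _ n)

end CurveConvergence

section LowerDensityBound

variable {E : Type*} [MeasurableSpace E] {μ : Measure E} {f : E → ℝ≥0∞} {s : Set E}

lemma mul_measure_le_withDensity {c : ℝ≥0∞} (hs : MeasurableSet s) (hf : ∀ x ∈ s, c ≤ f x) :
    c * μ s ≤ μ.withDensity f s := by
  rw [withDensity_apply f hs, ← setLIntegral_const]
  exact setLIntegral_mono' hs hf

lemma measure_inter_ne_zero_of_mem_support_withDensity_restrict [TopologicalSpace E]
    [OpensMeasurableSpace E] {V : Set E} (hV : IsOpen V) {w : E} (hwV : w ∈ V)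
    (hw : w ∈ ((μ.restrict s).withDensity f).support) : μ (V ∩ s) ≠ 0 := by
  rw [← Measure.restrict_apply hV.measurableSet]
  have hwμ := (withDensity_absolutelyContinuous _ _).support_mono hw
  exact ((Measure.mem_support_iff_forall w).1 hwμ V (hV.mem_nhds hwV)).ne'

end LowerDensityBound

lemma eventually_one_le_volume_smul {ι : Type*} [Fintype ι] {S : Set (EuclideanSpace ℝ ι)}
    (hS : volume S ≠ 0) : ∀ᶠ u : ℝ in atTop, 1 ≤ volume (u • S) := by
  rcases isEmpty_or_nonempty ι with hι | hι
  · obtain ⟨x, hx⟩ := nonempty_of_measure_ne_zero hS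
    refine Eventually.of_forall fun u => ?_
    have hmem : (0 : EuclideanSpace ℝ ι) ∈ u • S := ⟨x, hx, Subsingleton.elim _ _⟩
    rw [volume_euclideanSpace_eq_dirac, Measure.dirac_apply_of_mem hmem]
  · have hpow : Tendsto (fun u : ℝ => ENNReal.ofReal (u ^ Fintype.card ι)) atTop (𝓝 ∞) :=
      ENNReal.tendsto_ofReal_atTop.comp (tendsto_pow_atTop Fintype.card_ne_zero)
    have hvol : Tendsto (fun u : ℝ => ENNReal.ofReal (u ^ Fintype.card ι) * volume S) atTop
        (𝓝 ∞) := by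
      rw [← ENNReal.top_mul hS]
      exact ENNReal.Tendsto.mul_const hpow (Or.inl ENNReal.top_ne_zero)
    filter_upwards [hvol.eventually_const_le ENNReal.one_lt_top, eventually_ge_atTop 0]
      with u hu hu0
    rwa [Measure.addHaar_smul_of_nonneg _ hu0, finrank_euclideanSpace]

lemma coe_le_liminf_log_div {ι : Type*} {l : Filter ι} {p : ι → ℝ≥0∞} {q : ι → ℝ} {r : ℝ}
    (hq : ∀ᶠ u in l, 0 < q u) (hp : ∀ᶠ u in l, ENNReal.ofReal (Real.exp (r * q u)) ≤ p u) :
    (r : EReal) ≤ liminf (fun u => ENNReal.log (p u) / (q u : EReal)) l := by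
  refine le_liminf_of_le (by isBoundedDefault) ?_
  filter_upwards [hq, hp] with u hqu hpu
  rw [EReal.le_div_iff_mul_le (by exact_mod_cast hqu) (EReal.coe_ne_top _)]
  calc (r : EReal) * q u = ENNReal.log (ENNReal.ofReal (Real.exp (r * q u))) := by
        rw [ENNReal.log_ofReal_of_pos (Real.exp_pos _), Real.log_exp, EReal.coe_mul]
    _ ≤ ENNReal.log (p u) := ENNReal.log_monotone hpu

section RegularVariation

variable {d : ℕ} {P : Measure (Rn d)} {Ξ : Set (Rn d)} {Q : Rn d → ℝ} {q : ℝ → ℝ}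
  {lam : Rn d → ℝ} {w : Rn d} {c : ℝ}

lemma MultiRegVary.tendsto_prod (hQ : MultiRegVary Ξ Q q lam) (hw : w ∈ Ξ) :
    Tendsto (fun p : ℝ × Ξ => Q (p.1 • (p.2 : Rn d)) / q p.1) (atTop ×ˢ 𝓝 ⟨w, hw⟩)
      (𝓝 (lam w)) :=
  tendsto_uncurry_prod_of_forall_curve (F := fun u (z : Ξ) => Q (u • (z : Rn d)) / q u)
    (pure_le_nhds _) fun z hz =>
      hQ.2.2.2 w hw (fun u => z u) (fun u _ => (z u).2)
        ((continuous_subtype_val.tendsto _).comp hz)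

lemma MultiRegVary.exists_isOpen_eventually_forall_le (hQ : MultiRegVary Ξ Q q lam)
    (hq : ∀ᶠ u in atTop, 0 < q u) (hw : w ∈ Ξ) (hc : lam w < c) :
    ∃ V, IsOpen V ∧ w ∈ V ∧ ∀ᶠ u in atTop, ∀ z ∈ V ∩ Ξ, Q (u • z) ≤ c * q u := by
  obtain ⟨large, hlarge, near, hnear, hbound⟩ :=
    eventually_prod_iff.1 ((hQ.tendsto_prod hw).eventually_lt_const hc)
  obtain ⟨N, hN, hNnear⟩ := mem_nhds_subtype _ _ _ |>.1 hnear
  obtain ⟨V, hVN, hV, hwV⟩ := mem_nhds_iff.1 hN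
  refine ⟨V, hV, hwV, ?_⟩
  filter_upwards [hq, hlarge] with u hqu hu z hz
  have hz_near : near ⟨z, hz.2⟩ := hNnear (hVN hz.1)
  exact ((div_lt_iff₀ hqu).1 (hbound hu hz_near)).le

lemma eventually_ofReal_exp_le_measure (hΞ : MeasurableSet Ξ) (hcone : IsPosCone Ξ)
    (hP : P = (volume.restrict Ξ).withDensity fun z => ENNReal.ofReal (Real.exp (-Q z)))
    (hq : ∀ᶠ u in atTop, 0 < q u) (hQ : MultiRegVary Ξ Q q lam) {O : Set (Rn d)} (hO : IsOpen O)
    (hwO : w ∈ O) (hwΞ : w ∈ Ξ) (hw : w ∈ P.support) (hc : lam w < c) :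
    ∀ᶠ u : ℝ in atTop, ENNReal.ofReal (Real.exp (-c * q u)) ≤ P {z | u⁻¹ • z ∈ O} := by
  subst hP
  obtain ⟨V, hV, hwV, hbound⟩ := hQ.exists_isOpen_eventually_forall_le hq hwΞ hc
  set S := V ∩ O ∩ Ξ
  have hvol : volume S ≠ 0 :=
    measure_inter_ne_zero_of_mem_support_withDensity_restrict (hV.inter hO) ⟨hwV, hwO⟩ hw
  have hS : MeasurableSet S := (hV.inter hO).measurableSet.inter hΞ
  filter_upwards [hbound, eventually_one_le_volume_smul hvol, eventually_gt_atTop 0]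
    with u hQu hvolu hu
  have hsubΞ : u • S ⊆ Ξ := smul_set_subset_iff.2 fun z hz => hcone u hu z hz.2
  have hsubO : u • S ⊆ {z | u⁻¹ • z ∈ O} :=
    smul_set_subset_iff.2 fun z hz => by simpa [inv_smul_smul₀ hu.ne'] using hz.1.2
  have hdens : ∀ z ∈ u • S,
      ENNReal.ofReal (Real.exp (-c * q u)) ≤ ENNReal.ofReal (Real.exp (-Q z)) := by
    rintro _ ⟨z, hz, rfl⟩
    have hQz : Q (u • z) ≤ c * q u := hQu z ⟨hz.1.1, hz.2⟩
    gcongr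
    linarith
  calc ENNReal.ofReal (Real.exp (-c * q u))
      ≤ ENNReal.ofReal (Real.exp (-c * q u)) * volume (u • S) := le_mul_of_one_le_right' hvolu
    _ = ENNReal.ofReal (Real.exp (-c * q u)) * volume.restrict Ξ (u • S) := by
        rw [Measure.restrict_eq_self _ hsubΞ]
    _ ≤ (volume.restrict Ξ).withDensity (fun z => ENNReal.ofReal (Real.exp (-Q z))) (u • S) :=
        mul_measure_le_withDensity (hS.const_smul₀ u) hdens
    _ ≤ _ := measure_mono hsubO

theorem primitive_ldp_lower_general (hΞ : MeasurableSet Ξ) (hcone : IsPosCone Ξ)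
    (hsupp : Ξ ⊆ P.support)
    (hP : P = (volume.restrict Ξ).withDensity fun z => ENNReal.ofReal (Real.exp (-Q z)))
    (hq : ∀ᶠ u in atTop, 0 < q u) (hQ : MultiRegVary Ξ Q q lam) {O : Set (Rn d)}
    (hO : IsOpen O) :
    (- ⨅ w ∈ O ∩ Ξ, (lam w : EReal)) ≤
      liminf (fun u : ℝ => ENNReal.log (P {z | u⁻¹ • z ∈ O}) / (q u : EReal)) atTop := by
  rw [EReal.neg_le]
  refine le_iInf₂ fun w ⟨hwO, hwΞ⟩ => ?_
  rw [EReal.neg_le, ← EReal.ge_of_forall_gt_iff_ge]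
  intro r hr
  have hc : lam w < -r := lt_neg_of_lt_neg (by exact_mod_cast hr)
  refine coe_le_liminf_log_div hq ?_
  simpa only [neg_neg] using
    eventually_ofReal_exp_le_measure hΞ hcone hP hq hQ hO hwO hwΞ (hsupp hwΞ) hc

end RegularVariation

namespace Assumption1

variable {d : ℕ} {P : Measure (Rn d)} {Ξ : Set (Rn d)} {Q : Rn d → ℝ} {q : ℝ → ℝ}
  {lam : Rn d → ℝ} {α : ℝ}

lemma measurableSet (h : Assumption1 P Ξ Q q lam α) : MeasurableSet Ξ :=
  h.2.2.1.measurableSet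

lemma subset_support (h : Assumption1 P Ξ Q q lam α) : Ξ ⊆ P.support := by
  obtain ⟨_, -, -, -, -, hmin, -⟩ := h
  exact hmin _ Measure.isClosed_support
    ((mem_ae_iff_prob_eq_one Measure.isClosed_support.measurableSet).1 Measure.support_mem_ae)

lemma eq_withDensity_restrict (h : Assumption1 P Ξ Q q lam α) :
    P = (volume.restrict Ξ).withDensity fun z => ENNReal.ofReal (Real.exp (-Q z)) := by
  rw [← withDensity_indicator h.measurableSet]
  obtain ⟨-, -, -, -, -, -, hdens, -⟩ := h
  refine hdens.trans (congrArg volume.withDensity ?_)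
  exact (indicator_comp_of_zero ENNReal.ofReal_zero).symm

end Assumption1

/-- Primitive large deviation lower bound: for every open set `O`,
`liminf_{u→∞} log P(z/u ∈ O) / q(u) ≥ −inf{lam(w) : w ∈ O ∩ Ξ}`
(in `EReal`, with `log 0 = ⊥` and `inf ∅ = ⊤`). -/
theorem primitive_ldp_lower {d : ℕ} (P : Measure (Rn d)) (Ξ : Set (Rn d))
    (Q : Rn d → ℝ) (q : ℝ → ℝ) (lam : Rn d → ℝ) (α : ℝ)
    (hA1 : Assumption1 P Ξ Q q lam α)
    (O : Set (Rn d)) (hO : IsOpen O) :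
    (- ⨅ w ∈ O ∩ Ξ, (lam w : EReal)) ≤
      Filter.liminf
        (fun u : ℝ => ENNReal.log (P {z : Rn d | u⁻¹ • z ∈ O}) / ((q u : ℝ) : EReal))
        atTop := by
  have ⟨_, _, _, hcone, _, _, _, _, hq, hQ, _⟩ := hA1
  exact primitive_ldp_lower_general hA1.measurableSet hcone hA1.subset_support
    hA1.eq_withDensity_restrict ((eventually_gt_atTop 0).mono hq.1) hQ hO
end
end

section
/- Suppose Assumption 2 holds for X ⊆ ℝ^n, Ξ ⊆ ℝ^m, g : X × Ξ → ℝ, exponents (γ, ρ), and limit function g*. Then g* is homogeneous in the following sense: for every y ∈ X^∞_γ, every w ∈ Ξ, and every t > 0, one has t^γ y ∈ X^∞_γ, t w ∈ Ξ, and g*(t^γ y, t w) = t^ρ g*(y, w). -/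
open Filter Topology MeasureTheory Set

noncomputable section

/-- The asymptotic cone `A^∞_θ` of a set `A` with rate `θ`. -/
def asymCone {d : ℕ} (A : Set (Rn d)) (θ : ℝ) : Set (Rn d) :=
  {y | ∃ a : ℕ → Rn d, ∃ lamk : ℕ → ℝ,
    (∀ k, a k ∈ A) ∧ (∀ k, 0 < lamk k) ∧ Tendsto lamk atTop atTop ∧
    Tendsto (fun k => (lamk k ^ θ)⁻¹ • a k) atTop (𝓝 y)}

/-- Condition (A1): `gs` is a continuous limit function on `X^∞_γ × Ξ` and
`g(x_u, z_u)/u^ρ → gs(y, w)` along all admissible families. -/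
def CondA1 {n m : ℕ} (X : Set (Rn n)) (Ξ : Set (Rn m)) (g : Rn n → Rn m → ℝ)
    (γ ρ : ℝ) (gs : Rn n → Rn m → ℝ) : Prop :=
  ContinuousOn (fun p : Rn n × Rn m => gs p.1 p.2) ((asymCone X γ) ×ˢ Ξ) ∧
  ∀ y ∈ asymCone X γ, ∀ w ∈ Ξ, ∀ xu : ℝ → Rn n, ∀ zu : ℝ → Rn m,
    (∀ u : ℝ, 0 < u → xu u ∈ X) → (∀ u : ℝ, 0 < u → zu u ∈ Ξ) →
    Tendsto (fun u : ℝ => (u ^ γ)⁻¹ • xu u) atTop (𝓝 y) →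
    Tendsto (fun u : ℝ => u⁻¹ • zu u) atTop (𝓝 w) →
    Tendsto (fun u : ℝ => g (xu u) (zu u) / u ^ ρ) atTop (𝓝 (gs y w))

/-- Condition (A2): `X^∞_γ \ {0} ≠ ∅`. -/
def CondA2 {n : ℕ} (X : Set (Rn n)) (γ : ℝ) : Prop :=
  (asymCone X γ \ {0}).Nonempty

/-- Condition (A3): `gs(y, 0) < 0` for all `y ∈ X^∞_γ \ {0}`. -/
def CondA3 {n m : ℕ} (X : Set (Rn n)) (γ : ℝ) (gs : Rn n → Rn m → ℝ) : Prop :=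
  ∀ y ∈ asymCone X γ \ {0}, gs y 0 < 0

/-- Condition (A4): every `y ∈ X^∞_γ \ {0}` admits `w ∈ Ξ` with `gs(y, w) > 0`. -/
def CondA4 {n m : ℕ} (X : Set (Rn n)) (Ξ : Set (Rn m)) (γ : ℝ)
    (gs : Rn n → Rn m → ℝ) : Prop :=
  ∀ y ∈ asymCone X γ \ {0}, ∃ w ∈ Ξ, 0 < gs y w

/-- Condition (A5): if `γ < 0` then `g(0, z) ≤ 0` for all `z ∈ Ξ`. -/
def CondA5 {n m : ℕ} (Ξ : Set (Rn m)) (g : Rn n → Rn m → ℝ) (γ : ℝ) : Prop :=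
  γ < 0 → ∀ z ∈ Ξ, g 0 z ≤ 0

/-- Regularity preconditions of Assumption 2: `X` nonempty closed convex, `Ξ` a
nonempty closed cone, `g(·, z)` convex and lower semicontinuous on `X` for each
`z ∈ Ξ`, and `g(x, ·)` continuous on `Ξ` for each `x ∈ X`. -/
def GRegular {n m : ℕ} (X : Set (Rn n)) (Ξ : Set (Rn m))
    (g : Rn n → Rn m → ℝ) : Prop :=
  X.Nonempty ∧ IsClosed X ∧ Convex ℝ X ∧
  Ξ.Nonempty ∧ IsClosed Ξ ∧ IsPosCone Ξ ∧
  (∀ z ∈ Ξ, ConvexOn ℝ X (fun x => g x z)) ∧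
  (∀ z ∈ Ξ, LowerSemicontinuousOn (fun x => g x z) X) ∧
  (∀ x ∈ X, ContinuousOn (fun z => g x z) Ξ)

/-- Assumption 2: the regularity preconditions together with conditions (A1)–(A5)
for exponents `(γ, ρ)` with `γ ≠ 0`, `ρ ≥ 0`, and limit function `gs`. -/
def Assumption2 {n m : ℕ} (X : Set (Rn n)) (Ξ : Set (Rn m)) (g : Rn n → Rn m → ℝ)
    (γ ρ : ℝ) (gs : Rn n → Rn m → ℝ) : Prop :=
  GRegular X Ξ g ∧ γ ≠ 0 ∧ 0 ≤ ρ ∧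
  CondA1 X Ξ g γ ρ gs ∧ CondA2 X γ ∧ CondA3 X γ gs ∧ CondA4 X Ξ γ gs ∧
  CondA5 Ξ g γ

/-!
If `x₁ ∈ X ∩ s₁B` and `x₂ ∈ X ∩ s₂B` with `X` and `B` convex, then every convex combination
of `x₁` and `x₂` lies in `X ∩ sB` for the same combination `s` of `s₁` and `s₂`. So the scales
`s > 0` at which `s⁻¹X` meets a given ball form an interval, and a point of the asymptotic cone,
approximated along some sequence of scales tending to infinity, is approximated along all scales:
it is the limit of `x_u / u^γ` for a family `x_u ∈ X`. Evaluating the limit defining `g*` along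
both `(x_u, u w)` and its reparametrization `(x_{tu}, tu w)` gives the homogeneity.
-/

open scoped Pointwise

theorem convex_setOf_pos_inter_smul_nonempty {𝕜 E : Type*} [Field 𝕜] [LinearOrder 𝕜]
    [IsStrictOrderedRing 𝕜] [AddCommGroup E] [Module 𝕜 E] {X B : Set E}
    (hX : Convex 𝕜 X) (hB : Convex 𝕜 B) :
    Convex 𝕜 {s : 𝕜 | 0 < s ∧ (X ∩ s • B).Nonempty} := by
  rintro s₁ ⟨hs₁, x₁, hx₁, hx₁B⟩ s₂ ⟨hs₂, x₂, hx₂, hx₂B⟩ α β hα hβ hαβ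
  have hpos : 0 < α • s₁ + β • s₂ := convex_Ioi 0 hs₁ hs₂ hα hβ hαβ
  refine ⟨hpos, α • x₁ + β • x₂, hX hx₁ hx₂ hα hβ hαβ, ?_⟩
  rw [smul_eq_mul, smul_eq_mul, hB.add_smul (by positivity) (by positivity), mul_smul, mul_smul]
  exact add_mem_add (smul_mem_smul_set hx₁B) (smul_mem_smul_set hx₂B)

theorem rpow_mem_uIcc_of_mem_Icc {a b u : ℝ} (ha : 0 < a) (hu : u ∈ Icc a b) (θ : ℝ) :
    u ^ θ ∈ uIcc (a ^ θ) (b ^ θ) := by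
  have hu_pos : 0 < u := ha.trans_le hu.1
  rcases le_total 0 θ with hθ | hθ
  · exact Icc_subset_uIcc ⟨Real.rpow_le_rpow ha.le hu.1 hθ, Real.rpow_le_rpow hu_pos.le hu.2 hθ⟩
  · exact Icc_subset_uIcc' ⟨Real.rpow_le_rpow_of_nonpos hu_pos hu.2 hθ,
      Real.rpow_le_rpow_of_nonpos ha hu.1 hθ⟩

theorem exists_selection_tendsto_of_tendsto_infDist {ι E : Type*} [PseudoMetricSpace E]
    {l : Filter ι} {S : ι → Set E} {y : E} {δ : ι → ℝ} (hS : ∀ i, (S i).Nonempty)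
    (hdist : Tendsto (fun i => Metric.infDist y (S i)) l (𝓝 0))
    (hδ_pos : ∀ i, 0 < δ i) (hδ : Tendsto δ l (𝓝 0)) :
    ∃ p : ι → E, (∀ i, p i ∈ S i) ∧ Tendsto p l (𝓝 y) := by
  have hnear : ∀ i, ∃ p ∈ S i, dist y p < Metric.infDist y (S i) + δ i := fun i =>
    (Metric.infDist_lt_iff (hS i)).1 (lt_add_of_pos_right _ (hδ_pos i))
  choose p hpS hpy using hnear
  refine ⟨p, hpS, tendsto_iff_dist_tendsto_zero.2 ?_⟩
  have hbound : Tendsto (fun i => Metric.infDist y (S i) + δ i) l (𝓝 0) := by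
    simpa only [add_zero] using hdist.add hδ
  exact squeeze_zero (fun _ => dist_nonneg) (fun i => (dist_comm (p i) y ▸ hpy i).le) hbound

theorem tendsto_inv_rpow_smul_comp_mul_left {E : Type*} [TopologicalSpace E] [MulAction ℝ E]
    [ContinuousConstSMul ℝ E] {f : ℝ → E} {θ t : ℝ} {y : E} (ht : 0 < t)
    (hf : Tendsto (fun u : ℝ => (u ^ θ)⁻¹ • f u) atTop (𝓝 y)) :
    Tendsto (fun u : ℝ => (u ^ θ)⁻¹ • f (t * u)) atTop (𝓝 (t ^ θ • y)) := by
  have hscale : Tendsto (fun u : ℝ => t * u) atTop atTop := tendsto_id.const_mul_atTop ht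
  refine ((hf.comp hscale).const_smul (t ^ θ)).congr' ?_
  filter_upwards [eventually_gt_atTop 0] with u hu
  have htθ : t ^ θ ≠ 0 := (Real.rpow_pos_of_pos ht θ).ne'
  rw [Function.comp_apply, smul_smul, Real.mul_rpow ht.le hu.le, mul_inv,
    mul_inv_cancel_left₀ htθ]

theorem rpow_smul_mem_asymCone {d : ℕ} {A : Set (Rn d)} {θ t : ℝ} {y : Rn d} (ht : 0 < t)
    (hy : y ∈ asymCone A θ) : t ^ θ • y ∈ asymCone A θ := by
  obtain ⟨a, r, ha, hr_pos, hr, hlim⟩ := hy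
  refine ⟨a, fun k => r k / t, ha, fun k => div_pos (hr_pos k) ht, hr.atTop_div_const ht, ?_⟩
  refine (hlim.const_smul (t ^ θ)).congr fun k => ?_
  rw [smul_smul, Real.div_rpow (hr_pos k).le ht.le, inv_div, div_eq_mul_inv]

theorem nonempty_of_mem_asymCone {d : ℕ} {A : Set (Rn d)} {θ : ℝ} {y : Rn d}
    (hy : y ∈ asymCone A θ) : A.Nonempty :=
  let ⟨a, _, ha, _⟩ := hy
  ⟨a 0, ha 0⟩

theorem eventually_inter_rpow_smul_ball_nonempty {d : ℕ} {A : Set (Rn d)} {θ ε : ℝ} {y : Rn d}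
    (hA : Convex ℝ A) (hy : y ∈ asymCone A θ) (hε : 0 < ε) :
    ∀ᶠ u : ℝ in atTop, (A ∩ u ^ θ • Metric.ball y ε).Nonempty := by
  obtain ⟨a, r, ha, hr_pos, hr, hlim⟩ := hy
  have hscales : ∀ᶠ k in atTop, r k ^ θ ∈ {s : ℝ | 0 < s ∧ (A ∩ s • Metric.ball y ε).Nonempty} := by
    filter_upwards [hlim.eventually (Metric.ball_mem_nhds y hε)] with k hk
    have hrθ : 0 < r k ^ θ := Real.rpow_pos_of_pos (hr_pos k) θ
    exact ⟨hrθ, a k, ha k, (mem_smul_set_iff_inv_smul_mem₀ hrθ.ne' _ _).2 hk⟩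
  obtain ⟨i, hi⟩ := hscales.exists
  filter_upwards [eventually_ge_atTop (r i)] with u hu
  obtain ⟨j, hj, huj⟩ := (hscales.and (hr.eventually_ge_atTop u)).exists
  have hinterval := (convex_setOf_pos_inter_smul_nonempty hA (convex_ball y ε)).ordConnected
  exact (hinterval.uIcc_subset hi hj (rpow_mem_uIcc_of_mem_Icc (hr_pos i) ⟨hu, huj⟩ θ)).2

theorem tendsto_infDist_inv_rpow_smul {d : ℕ} {A : Set (Rn d)} {θ : ℝ} {y : Rn d}
    (hA : Convex ℝ A) (hy : y ∈ asymCone A θ) :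
    Tendsto (fun u : ℝ => Metric.infDist y ((u ^ θ)⁻¹ • A)) atTop (𝓝 0) := by
  refine Metric.tendsto_nhds.2 fun ε hε => ?_
  filter_upwards [eventually_inter_rpow_smul_ball_nonempty hA hy hε, eventually_gt_atTop 0]
    with u ⟨x, hxA, hx_ball⟩ hu
  have huθ : u ^ θ ≠ 0 := (Real.rpow_pos_of_pos hu θ).ne'
  rw [Real.dist_0_eq_abs, abs_of_nonneg Metric.infDist_nonneg]
  calc Metric.infDist y ((u ^ θ)⁻¹ • A)
      ≤ dist y ((u ^ θ)⁻¹ • x) := Metric.infDist_le_dist_of_mem (smul_mem_smul_set hxA)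
    _ < ε := Metric.mem_ball'.1 ((mem_smul_set_iff_inv_smul_mem₀ huθ _ _).1 hx_ball)

theorem exists_family_tendsto_of_mem_asymCone {d : ℕ} {A : Set (Rn d)} {θ : ℝ} {y : Rn d}
    (hA : Convex ℝ A) (hy : y ∈ asymCone A θ) :
    ∃ x : ℝ → Rn d, (∀ u, x u ∈ A) ∧ Tendsto (fun u : ℝ => (u ^ θ)⁻¹ • x u) atTop (𝓝 y) := by
  obtain ⟨p, hpA, hp⟩ := exists_selection_tendsto_of_tendsto_infDist
    (fun _ => (nonempty_of_mem_asymCone hy).smul_set) (tendsto_infDist_inv_rpow_smul hA hy)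
    (fun u => Real.exp_pos (-u)) Real.tendsto_exp_neg_atTop_nhds_zero
  choose x hxA hxp using fun u => mem_smul_set.1 (hpA u)
  exact ⟨x, hxA, hp.congr fun u => (hxp u).symm⟩

theorem tendsto_inv_smul_smul_atTop {E : Type*} [TopologicalSpace E] [MulAction ℝ E] (w : E) :
    Tendsto (fun u : ℝ => u⁻¹ • u • w) atTop (𝓝 w) :=
  tendsto_const_nhds.congr' <| (eventually_ne_atTop 0).mono fun _ hu => (inv_smul_smul₀ hu w).symm

theorem gstar_homogeneous_general {n m : ℕ} {X : Set (Rn n)} {Ξ : Set (Rn m)}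
    {g : Rn n → Rn m → ℝ} {γ ρ : ℝ} {gs : Rn n → Rn m → ℝ}
    (hX : Convex ℝ X) (hΞ : IsPosCone Ξ)
    (hlim : ∀ y ∈ asymCone X γ, ∀ w ∈ Ξ, ∀ xu : ℝ → Rn n, ∀ zu : ℝ → Rn m,
      (∀ u : ℝ, 0 < u → xu u ∈ X) → (∀ u : ℝ, 0 < u → zu u ∈ Ξ) →
      Tendsto (fun u : ℝ => (u ^ γ)⁻¹ • xu u) atTop (𝓝 y) →
      Tendsto (fun u : ℝ => u⁻¹ • zu u) atTop (𝓝 w) →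
      Tendsto (fun u : ℝ => g (xu u) (zu u) / u ^ ρ) atTop (𝓝 (gs y w)))
    {y : Rn n} (hy : y ∈ asymCone X γ) {w : Rn m} (hw : w ∈ Ξ) {t : ℝ} (ht : 0 < t) :
    t ^ γ • y ∈ asymCone X γ ∧ t • w ∈ Ξ ∧ gs (t ^ γ • y) (t • w) = t ^ ρ * gs y w := by
  have hty : t ^ γ • y ∈ asymCone X γ := rpow_smul_mem_asymCone ht hy
  have htw : t • w ∈ Ξ := hΞ t ht w hw
  refine ⟨hty, htw, ?_⟩
  obtain ⟨x, hxX, hx⟩ := exists_family_tendsto_of_mem_asymCone hX hy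
  have hz : Tendsto (fun u : ℝ => u⁻¹ • u • w) atTop (𝓝 w) := tendsto_inv_smul_smul_atTop w
  have hz_rescaled : Tendsto (fun u : ℝ => u⁻¹ • (t * u) • w) atTop (𝓝 (t • w)) := by
    simpa only [Real.rpow_one] using
      tendsto_inv_rpow_smul_comp_mul_left (θ := 1) (f := fun u => u • w) ht
        (by simpa only [Real.rpow_one] using hz)
  have hg : Tendsto (fun u => g (x u) (u • w) / u ^ ρ) atTop (𝓝 (gs y w)) :=
    hlim y hy w hw x _ (fun u _ => hxX u) (fun u hu => hΞ u hu w hw) hx hz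
  have hg_rescaled : Tendsto (fun u => g (x (t * u)) ((t * u) • w) / u ^ ρ) atTop
      (𝓝 (gs (t ^ γ • y) (t • w))) :=
    hlim _ hty _ htw _ _ (fun u _ => hxX (t * u)) (fun u hu => hΞ _ (mul_pos ht hu) w hw)
      (tendsto_inv_rpow_smul_comp_mul_left ht hx) hz_rescaled
  simp only [div_eq_inv_mul] at hg hg_rescaled
  exact tendsto_nhds_unique hg_rescaled
    (tendsto_inv_rpow_smul_comp_mul_left (f := fun u => g (x u) (u • w)) ht hg)

/-- Under Assumption 2, the limit function `gs` is homogeneous: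
`gs(t^γ y, t w) = t^ρ gs(y, w)` for `t > 0`, and the scaled arguments stay in
`X^∞_γ` and `Ξ` respectively. -/
theorem gstar_homogeneous {n m : ℕ} (X : Set (Rn n)) (Ξ : Set (Rn m))
    (g : Rn n → Rn m → ℝ) (γ ρ : ℝ) (gs : Rn n → Rn m → ℝ)
    (hA2 : Assumption2 X Ξ g γ ρ gs) :
    ∀ y ∈ asymCone X γ, ∀ w ∈ Ξ, ∀ t : ℝ, 0 < t →
      (t ^ γ) • y ∈ asymCone X γ ∧ t • w ∈ Ξ ∧
      gs ((t ^ γ) • y) (t • w) = (t ^ ρ) * gs y w := by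
  obtain ⟨⟨-, -, hX, -, -, hΞ, -⟩, -, -, ⟨-, hlim⟩, -⟩ := hA2
  exact fun y hy w hw t ht => gstar_homogeneous_general hX hΞ hlim hy hw ht
end
end

section
/- Suppose Assumption 2 holds for X ⊆ ℝ^n, Ξ ⊆ ℝ^m, g : X × Ξ → ℝ, exponents (γ, ρ), and limit function g*, and suppose ρ > 0. Then 0 ∈ X^∞_γ and g*(0, 0) = 0. -/
open Filter Topology MeasureTheory Set

noncomputable section

/-!
A single point `x₀ ∈ X` with `x₀ / u ^ γ → 0` settles both claims: for `γ > 0` any point of `X`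
will do, while for `γ < 0` the origin itself lies in the closed set `X`, because
`a_k / λ_k ^ γ → y` forces `a_k → 0`. Along the constant families `x_u = x₀` and `z_u = 0`, the
numerator of `g(x_u, z_u) / u ^ ρ` is constant, so the quotient tends both to `g*(0, 0)` and to `0`.
-/

theorem tendsto_inv_rpow_smul_const {E : Type*} [AddCommGroup E] [Module ℝ E]
    [TopologicalSpace E] [ContinuousSMul ℝ E] {θ : ℝ} (hθ : 0 < θ) (x : E) :
    Tendsto (fun u : ℝ => (u ^ θ)⁻¹ • x) atTop (𝓝 0) := by
  simpa only [Pi.inv_apply, zero_smul] using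
    (tendsto_rpow_atTop hθ).inv_tendsto_atTop.smul_const x

theorem IsPosCone.zero_mem_closure {d : ℕ} {Z : Set (Rn d)} (hZ : IsPosCone Z)
    (hne : Z.Nonempty) : (0 : Rn d) ∈ closure Z := by
  obtain ⟨z, hz⟩ := hne
  refine mem_closure_of_tendsto (tendsto_inv_rpow_smul_const one_pos z) ?_
  filter_upwards [eventually_gt_atTop 0] with u hu
  exact hZ _ (inv_pos.mpr (Real.rpow_pos_of_pos hu 1)) z hz

section AsymCone

variable {d : ℕ} {A : Set (Rn d)} {θ : ℝ}

theorem mem_asymCone_of_tendsto {x : ℝ → Rn d} {y : Rn d} (hx : ∀ u, 0 < u → x u ∈ A)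
    (hlim : Tendsto (fun u : ℝ => (u ^ θ)⁻¹ • x u) atTop (𝓝 y)) : y ∈ asymCone A θ := by
  have index_tendsto : Tendsto (fun k : ℕ => (k : ℝ) + 1) atTop atTop :=
    tendsto_atTop_add_const_right _ _ tendsto_natCast_atTop_atTop
  exact ⟨fun k => x (k + 1), fun k => k + 1, fun k => hx _ k.cast_add_one_pos,
    fun k => k.cast_add_one_pos, index_tendsto, hlim.comp index_tendsto⟩

theorem nonempty_of_asymCone_nonempty (h : (asymCone A θ).Nonempty) : A.Nonempty := by
  obtain ⟨_, a, _, ha, _⟩ := h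
  exact ⟨a 0, ha 0⟩

theorem zero_mem_closure_of_asymCone_nonempty (hθ : θ < 0) (h : (asymCone A θ).Nonempty) :
    (0 : Rn d) ∈ closure A := by
  obtain ⟨y, a, l, ha, hl_pos, hl, hlim⟩ := h
  have scale_tendsto : Tendsto (fun k => l k ^ θ) atTop (𝓝 0) := by
    simpa only [neg_neg, Function.comp_def] using
      (tendsto_rpow_neg_atTop (neg_pos.mpr hθ)).comp hl
  have unscale (k : ℕ) : l k ^ θ • (l k ^ θ)⁻¹ • a k = a k :=
    smul_inv_smul₀ (Real.rpow_pos_of_pos (hl_pos k) θ).ne' (a k)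
  have a_tendsto : Tendsto a atTop (𝓝 0) := by
    simpa only [unscale, zero_smul] using scale_tendsto.smul hlim
  exact mem_closure_of_tendsto a_tendsto (Eventually.of_forall ha)

theorem exists_mem_tendsto_inv_rpow_smul_zero (hA : IsClosed A) (hθ : θ ≠ 0)
    (h : (asymCone A θ).Nonempty) :
    ∃ x ∈ A, Tendsto (fun u : ℝ => (u ^ θ)⁻¹ • x) atTop (𝓝 0) := by
  rcases hθ.lt_or_gt with hneg | hpos
  · have zero_mem : (0 : Rn d) ∈ A :=
      hA.closure_subset (zero_mem_closure_of_asymCone_nonempty hneg h)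
    exact ⟨0, zero_mem, by simp only [smul_zero, tendsto_const_nhds]⟩
  · obtain ⟨x, hx⟩ := nonempty_of_asymCone_nonempty h
    exact ⟨x, hx, tendsto_inv_rpow_smul_const hpos x⟩

end AsymCone

/-- The scaling limit in (A1), with no continuity demanded of `gs`: `g(x_u, z_u) / u ^ ρ` tends to
`gs y w` whenever `x_u / u ^ γ → y ∈ X^∞_γ` and `z_u / u → w ∈ Ξ`. The families are functions on all
of `ℝ`, constrained only at `u > 0`. -/
def HasScalingLimit {n m : ℕ} (X : Set (Rn n)) (Ξ : Set (Rn m)) (g : Rn n → Rn m → ℝ)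
    (γ ρ : ℝ) (gs : Rn n → Rn m → ℝ) : Prop :=
  ∀ y ∈ asymCone X γ, ∀ w ∈ Ξ, ∀ xu : ℝ → Rn n, ∀ zu : ℝ → Rn m,
    (∀ u : ℝ, 0 < u → xu u ∈ X) → (∀ u : ℝ, 0 < u → zu u ∈ Ξ) →
    Tendsto (fun u : ℝ => (u ^ γ)⁻¹ • xu u) atTop (𝓝 y) →
    Tendsto (fun u : ℝ => u⁻¹ • zu u) atTop (𝓝 w) →
    Tendsto (fun u : ℝ => g (xu u) (zu u) / u ^ ρ) atTop (𝓝 (gs y w))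

section ScalingLimit

variable {n m : ℕ} {X : Set (Rn n)} {Ξ : Set (Rn m)} {g : Rn n → Rn m → ℝ} {γ ρ : ℝ}
  {gs : Rn n → Rn m → ℝ}

theorem HasScalingLimit.apply_zero_zero (hg : HasScalingLimit X Ξ g γ ρ gs) (hρ : 0 < ρ)
    (hΞ : (0 : Rn m) ∈ Ξ) {x : Rn n} (hx : x ∈ X)
    (hlim : Tendsto (fun u : ℝ => (u ^ γ)⁻¹ • x) atTop (𝓝 0)) : gs 0 0 = 0 := by
  have tendsto_gs : Tendsto (fun u : ℝ => g x 0 / u ^ ρ) atTop (𝓝 (gs 0 0)) :=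
    hg 0 (mem_asymCone_of_tendsto (fun _ _ => hx) hlim) 0 hΞ (fun _ => x) (fun _ => 0)
      (fun _ _ => hx) (fun _ _ => hΞ) hlim (by simp only [smul_zero, tendsto_const_nhds])
  have tendsto_zero : Tendsto (fun u : ℝ => g x 0 / u ^ ρ) atTop (𝓝 0) :=
    tendsto_const_nhds.div_atTop (tendsto_rpow_atTop hρ)
  exact tendsto_nhds_unique tendsto_gs tendsto_zero

theorem gstar_origin_pos_rho_general (hX : IsClosed X) (hΞ : (0 : Rn m) ∈ Ξ) (hγ : γ ≠ 0)
    (hρ : 0 < ρ) (hcone : (asymCone X γ).Nonempty) (hg : HasScalingLimit X Ξ g γ ρ gs) :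
    (0 : Rn n) ∈ asymCone X γ ∧ gs 0 0 = 0 := by
  obtain ⟨x, hx, hlim⟩ := exists_mem_tendsto_inv_rpow_smul_zero hX hγ hcone
  exact ⟨mem_asymCone_of_tendsto (fun _ _ => hx) hlim, hg.apply_zero_zero hρ hΞ hx hlim⟩

end ScalingLimit

/-- Under Assumption 2 with `ρ > 0`, the limit function vanishes at the origin. -/
theorem gstar_origin_pos_rho {n m : ℕ} (X : Set (Rn n)) (Ξ : Set (Rn m))
    (g : Rn n → Rn m → ℝ) (γ ρ : ℝ) (gs : Rn n → Rn m → ℝ)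
    (hA2 : Assumption2 X Ξ g γ ρ gs) (hρ : 0 < ρ) :
    (0 : Rn n) ∈ asymCone X γ ∧ gs 0 0 = 0 := by
  obtain ⟨⟨-, hX, -, hΞne, hΞ, hΞcone, -⟩, hγ, -, ⟨-, hg⟩, hcone, -⟩ := hA2
  exact gstar_origin_pos_rho_general hX (hΞ.closure_subset (hΞcone.zero_mem_closure hΞne)) hγ hρ
    (hcone.mono sdiff_subset) hg
end
end

section
/- Suppose Assumption 2 holds for X ⊆ ℝ^n, Ξ ⊆ ℝ^m, g : X × Ξ → ℝ, exponents (γ, ρ), and limit function g*. Then for every fixed w ∈ Ξ the function g*(·, w) is convex on X^∞_γ: for all y₁, y₂ ∈ X^∞_γ and all t ∈ [0,1], the point t y₁ + (1−t) y₂ belongs to X^∞_γ and g*(t y₁ + (1−t) y₂, w) ≤ t g*(y₁, w) + (1−t) g*(y₂, w). -/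
open Filter Topology MeasureTheory Set

noncomputable section

/-!
For a convex set `X`, the set `X^∞_γ` consists of limits of `a_k / r_k` with `a_k ∈ X` and
`r_k = λ_k ^ γ`, where `r_k → ∞` (recession directions) if `γ > 0` and `r_k → 0⁺` (tangent
directions at `0`) if `γ < 0`. In both cases one sequence of scales controls all others: for
`s ≤ r_k` and `x₀ ∈ X` the point `(1 - s / r_k) x₀ + (s / r_k) a_k` lies in `X` and, divided by `s`,
is within `‖x₀ / s‖` of `a_k / r_k`. Hence every `y ∈ X^∞_γ` is the limit of `x_u / u ^ γ` for a
full family `(x_u)` in `X`: take `x₀` fixed if `γ > 0`, and `x₀ = a_j` with `j` large, so that `x₀`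
is close to `0`, if `γ < 0`. Convex combinations of such families are again such families, so the
convexity inequality for `g(·, u w) / u ^ ρ` passes to the limit.
-/

section Rescaling

open Metric
open scoped Pointwise

theorem exists_tendsto_of_tendsto_infDist {M : Type*} [PseudoMetricSpace M] {S : ℝ → Set M} {y : M}
    (hS : ∀ u, (S u).Nonempty) (h : Tendsto (fun u => infDist y (S u)) atTop (𝓝 0)) :
    ∃ p : ℝ → M, (∀ u, p u ∈ S u) ∧ Tendsto p atTop (𝓝 y) := by
  have near : ∀ u, ∃ p ∈ S u, dist y p < infDist y (S u) + Real.exp (-u) := fun u =>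
    (infDist_lt_iff (hS u)).1 (lt_add_of_pos_right _ (Real.exp_pos _))
  choose p hpS hp using near
  have bound_tendsto : Tendsto (fun u => infDist y (S u) + Real.exp (-u)) atTop (𝓝 0) := by
    simpa only [add_zero] using h.add Real.tendsto_exp_neg_atTop_nhds_zero
  refine ⟨p, hpS, tendsto_iff_dist_tendsto_zero.2 ?_⟩
  exact squeeze_zero (fun _ => dist_nonneg) (fun u => (dist_comm _ _).trans_le (hp u).le)
    bound_tendsto

variable {E : Type*} [SeminormedAddCommGroup E] [NormedSpace ℝ E] {X : Set E} {y : E}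

theorem infDist_inv_smul_le_norm_add_dist (hX : Convex ℝ X) {x₀ a : E} (hx₀ : x₀ ∈ X) (ha : a ∈ X)
    {s r : ℝ} (hs : 0 < s) (hsr : s ≤ r) :
    infDist y (s⁻¹ • X) ≤ ‖s⁻¹ • x₀‖ + dist (r⁻¹ • a) y := by
  have hr : 0 < r := hs.trans_le hsr
  have ratio_nonneg : 0 ≤ s / r := by positivity
  have ratio_le_one : s / r ≤ 1 := (div_le_one hr).2 hsr
  have mem : (1 - s / r) • x₀ + (s / r) • a ∈ X :=
    hX hx₀ ha (sub_nonneg.2 ratio_le_one) ratio_nonneg (sub_add_cancel _ _)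
  have rescaled : s⁻¹ • ((1 - s / r) • x₀ + (s / r) • a) =
      (1 - s / r) • (s⁻¹ • x₀) + r⁻¹ • a := by
    rw [smul_add, smul_comm, smul_smul s⁻¹ (s / r), show s⁻¹ * (s / r) = r⁻¹ by field_simp]
  calc infDist y (s⁻¹ • X)
      ≤ dist y (s⁻¹ • ((1 - s / r) • x₀ + (s / r) • a)) :=
        infDist_le_dist_of_mem (smul_mem_smul_set mem)
    _ = ‖(1 - s / r) • (s⁻¹ • x₀) + (r⁻¹ • a - y)‖ := by
        rw [rescaled, dist_comm, dist_eq_norm, add_sub_assoc]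
    _ ≤ ‖(1 - s / r) • (s⁻¹ • x₀)‖ + ‖r⁻¹ • a - y‖ := norm_add_le _ _
    _ ≤ ‖s⁻¹ • x₀‖ + dist (r⁻¹ • a) y := by
        rw [norm_smul, Real.norm_of_nonneg (sub_nonneg.2 ratio_le_one), dist_eq_norm]
        gcongr
        exact mul_le_of_le_one_left (norm_nonneg _) (sub_le_self _ ratio_nonneg)

theorem tendsto_smul_add_smul {ι : Type*} {l : Filter ι} {c : ι → ℝ} {x₁ x₂ : ι → E} {y₁ y₂ : E}
    (a b : ℝ) (h₁ : Tendsto (fun i => c i • x₁ i) l (𝓝 y₁))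
    (h₂ : Tendsto (fun i => c i • x₂ i) l (𝓝 y₂)) :
    Tendsto (fun i => c i • (a • x₁ i + b • x₂ i)) l (𝓝 (a • y₁ + b • y₂)) := by
  simpa only [smul_add, smul_comm _ a, smul_comm _ b] using (h₁.const_smul a).add (h₂.const_smul b)

variable {ι : Type*} {l : Filter ι} [l.NeBot] {a : ι → E} {r : ι → ℝ}

theorem tendsto_infDist_inv_smul_atTop (hX : Convex ℝ X) (ha : ∀ i, a i ∈ X)
    (hr : Tendsto r l atTop) (hy : Tendsto (fun i => (r i)⁻¹ • a i) l (𝓝 y)) :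
    Tendsto (fun s : ℝ => infDist y (s⁻¹ • X)) atTop (𝓝 0) := by
  obtain ⟨i₀⟩ := l.nonempty_of_neBot
  have base_tendsto : Tendsto (fun s : ℝ => ‖s⁻¹ • a i₀‖) atTop (𝓝 0) := by
    simpa only [zero_smul, norm_zero] using
      ((tendsto_inv_atTop_zero (𝕜 := ℝ)).smul_const (a i₀)).norm
  refine tendsto_order.2
    ⟨fun _ hneg => .of_forall fun _ => hneg.trans_le infDist_nonneg, fun ε hε => ?_⟩
  filter_upwards [base_tendsto.eventually_lt_const (half_pos hε), eventually_gt_atTop 0]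
    with s base_small hs
  obtain ⟨i, hi, hsr⟩ :=
    ((Metric.tendsto_nhds.1 hy _ (half_pos hε)).and (hr.eventually_ge_atTop s)).exists
  linarith [infDist_inv_smul_le_norm_add_dist (y := y) hX (ha i₀) (ha i) hs hsr]

theorem tendsto_infDist_inv_smul_nhdsGT_zero (hX : Convex ℝ X) (ha : ∀ i, a i ∈ X)
    (hr : Tendsto r l (𝓝[>] 0)) (hy : Tendsto (fun i => (r i)⁻¹ • a i) l (𝓝 y)) :
    Tendsto (fun s : ℝ => infDist y (s⁻¹ • X)) (𝓝[>] 0) (𝓝 0) := by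
  have r_pos : ∀ᶠ i in l, 0 < r i := hr.eventually self_mem_nhdsWithin
  have a_tendsto : Tendsto a l (𝓝 0) := by
    have h := (tendsto_nhds_of_tendsto_nhdsWithin hr).smul hy
    rw [zero_smul] at h
    exact h.congr' (r_pos.mono fun i hi => smul_inv_smul₀ hi.ne' (a i))
  refine tendsto_order.2
    ⟨fun _ hneg => .of_forall fun _ => hneg.trans_le infDist_nonneg, fun ε hε => ?_⟩
  obtain ⟨i, hi, hri⟩ := ((Metric.tendsto_nhds.1 hy _ (half_pos hε)).and r_pos).exists
  filter_upwards [Ioc_mem_nhdsGT hri] with s ⟨hs, hsr⟩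
  have base_tendsto : Tendsto (fun j => ‖s⁻¹ • a j‖) l (𝓝 0) := by
    simpa only [smul_zero, norm_zero] using (a_tendsto.const_smul s⁻¹).norm
  obtain ⟨j, base_small⟩ := (base_tendsto.eventually_lt_const (half_pos hε)).exists
  linarith [infDist_inv_smul_le_norm_add_dist (y := y) hX (ha j) (ha i) hs hsr]

end Rescaling

theorem tendsto_rpow_atTop_nhdsGT_zero {γ : ℝ} (hγ : γ < 0) :
    Tendsto (fun u : ℝ => u ^ γ) atTop (𝓝[>] 0) := by
  refine tendsto_nhdsWithin_iff.2 ⟨?_, ?_⟩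
  · simpa only [neg_neg] using tendsto_rpow_neg_atTop (neg_pos.2 hγ)
  · filter_upwards [eventually_gt_atTop 0] with u hu using Real.rpow_pos_of_pos hu γ

/-- The asymptotic cone `A^∞_θ` in an arbitrary seminormed space. On Euclidean space it is
definitionally `asymCone`. -/
def asymptoticConeOfRate {E : Type*} [SeminormedAddCommGroup E] [NormedSpace ℝ E] (A : Set E)
    (θ : ℝ) : Set E :=
  {y | ∃ a : ℕ → E, ∃ lamk : ℕ → ℝ,
    (∀ k, a k ∈ A) ∧ (∀ k, 0 < lamk k) ∧ Tendsto lamk atTop atTop ∧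
    Tendsto (fun k => (lamk k ^ θ)⁻¹ • a k) atTop (𝓝 y)}

section AsymptoticCone

open Metric
open scoped Pointwise

variable {E : Type*} [SeminormedAddCommGroup E] [NormedSpace ℝ E] {X : Set E} {γ : ℝ} {y : E}

theorem tendsto_infDist_inv_rpow_smul_s14 (hX : Convex ℝ X) (hy : y ∈ asymptoticConeOfRate X γ) :
    Tendsto (fun u : ℝ => infDist y ((u ^ γ)⁻¹ • X)) atTop (𝓝 0) := by
  obtain ⟨a, lamk, ha, -, hlamk, hlim⟩ := hy
  rcases lt_trichotomy γ 0 with hγ | rfl | hγ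
  · have scale := tendsto_rpow_atTop_nhdsGT_zero hγ
    exact (tendsto_infDist_inv_smul_nhdsGT_zero hX ha (scale.comp hlamk) hlim).comp scale
  · simp only [Real.rpow_zero, inv_one, one_smul] at hlim ⊢
    have y_mem_closure : y ∈ closure X := mem_closure_of_tendsto hlim (Eventually.of_forall ha)
    simp only [infDist_zero_of_mem_closure y_mem_closure, tendsto_const_nhds]
  · have scale := tendsto_rpow_atTop hγ
    exact (tendsto_infDist_inv_smul_atTop hX ha (scale.comp hlamk) hlim).comp scale

theorem mem_asymptoticConeOfRate_of_tendsto {x : ℝ → E} (hx : ∀ u, x u ∈ X)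
    (hlim : Tendsto (fun u : ℝ => (u ^ γ)⁻¹ • x u) atTop (𝓝 y)) :
    y ∈ asymptoticConeOfRate X γ := by
  have scale : Tendsto (fun k : ℕ => (k : ℝ) + 1) atTop atTop :=
    tendsto_atTop_add_const_right _ _ tendsto_natCast_atTop_atTop
  exact ⟨_, _, fun k => hx (k + 1), fun k => k.cast_add_one_pos, scale, hlim.comp scale⟩

theorem exists_tendsto_of_mem_asymptoticConeOfRate (hX : Convex ℝ X)
    (hy : y ∈ asymptoticConeOfRate X γ) :
    ∃ x : ℝ → E, (∀ u, x u ∈ X) ∧ Tendsto (fun u : ℝ => (u ^ γ)⁻¹ • x u) atTop (𝓝 y) := by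
  have X_nonempty : X.Nonempty := let ⟨a, _, ha, _⟩ := hy; ⟨a 0, ha 0⟩
  obtain ⟨p, hpX, hp⟩ := exists_tendsto_of_tendsto_infDist (fun _ => X_nonempty.smul_set)
    (tendsto_infDist_inv_rpow_smul_s14 hX hy)
  choose x hx hxp using hpX
  exact ⟨x, hx, hp.congr fun u => (hxp u).symm⟩

theorem convex_asymptoticConeOfRate (hX : Convex ℝ X) : Convex ℝ (asymptoticConeOfRate X γ) := by
  intro y₁ hy₁ y₂ hy₂ a b ha hb hab
  obtain ⟨x₁, hx₁, hlim₁⟩ := exists_tendsto_of_mem_asymptoticConeOfRate hX hy₁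
  obtain ⟨x₂, hx₂, hlim₂⟩ := exists_tendsto_of_mem_asymptoticConeOfRate hX hy₂
  exact mem_asymptoticConeOfRate_of_tendsto (fun u => hX (hx₁ u) (hx₂ u) ha hb hab)
    (tendsto_smul_add_smul a b hlim₁ hlim₂)

theorem convexOn_asymptoticConeOfRate_of_tendsto {f : ℝ → E → ℝ} {h : E → ℝ}
    (hf : ∀ᶠ u in atTop, ConvexOn ℝ X (f u))
    (hlim : ∀ y ∈ asymptoticConeOfRate X γ, ∀ x : ℝ → E, (∀ u, x u ∈ X) →
      Tendsto (fun u : ℝ => (u ^ γ)⁻¹ • x u) atTop (𝓝 y) →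
      Tendsto (fun u => f u (x u)) atTop (𝓝 (h y))) :
    ConvexOn ℝ (asymptoticConeOfRate X γ) h := by
  have hX : Convex ℝ X := hf.exists.choose_spec.1
  refine ⟨convex_asymptoticConeOfRate hX, fun y₁ hy₁ y₂ hy₂ a b ha hb hab => ?_⟩
  obtain ⟨x₁, hx₁, hlim₁⟩ := exists_tendsto_of_mem_asymptoticConeOfRate hX hy₁
  obtain ⟨x₂, hx₂, hlim₂⟩ := exists_tendsto_of_mem_asymptoticConeOfRate hX hy₂
  have combo_tendsto := hlim _ (convex_asymptoticConeOfRate hX hy₁ hy₂ ha hb hab) _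
    (fun u => hX (hx₁ u) (hx₂ u) ha hb hab) (tendsto_smul_add_smul a b hlim₁ hlim₂)
  have bound_tendsto :=
    ((hlim y₁ hy₁ x₁ hx₁ hlim₁).const_smul a).add ((hlim y₂ hy₂ x₂ hx₂ hlim₂).const_smul b)
  exact le_of_tendsto_of_tendsto combo_tendsto bound_tendsto
    (hf.mono fun u hu => hu.2 (hx₁ u) (hx₂ u) ha hb hab)

theorem gstar_convex_general {F : Type*} [AddCommGroup F] [Module ℝ F] [TopologicalSpace F]
    {Ξ : Set F} {g gs : E → F → ℝ} {ρ : ℝ} (hΞ : ∀ c : ℝ, 0 < c → ∀ z ∈ Ξ, c • z ∈ Ξ)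
    (hg : ∀ z ∈ Ξ, ConvexOn ℝ X (fun x => g x z))
    (hlim : ∀ y ∈ asymptoticConeOfRate X γ, ∀ w ∈ Ξ, ∀ xu : ℝ → E, ∀ zu : ℝ → F,
      (∀ u : ℝ, 0 < u → xu u ∈ X) → (∀ u : ℝ, 0 < u → zu u ∈ Ξ) →
      Tendsto (fun u : ℝ => (u ^ γ)⁻¹ • xu u) atTop (𝓝 y) →
      Tendsto (fun u : ℝ => u⁻¹ • zu u) atTop (𝓝 w) →
      Tendsto (fun u : ℝ => g (xu u) (zu u) / u ^ ρ) atTop (𝓝 (gs y w)))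
    {w : F} (hw : w ∈ Ξ) : ConvexOn ℝ (asymptoticConeOfRate X γ) (fun y => gs y w) := by
  have ray_mem : ∀ u : ℝ, 0 < u → u • w ∈ Ξ := fun u hu => hΞ u hu w hw
  have ray_tendsto : Tendsto (fun u : ℝ => u⁻¹ • u • w) atTop (𝓝 w) :=
    tendsto_const_nhds.congr' <|
      (eventually_gt_atTop 0).mono fun u hu => (inv_smul_smul₀ hu.ne' w).symm
  refine convexOn_asymptoticConeOfRate_of_tendsto (f := fun u x => g x (u • w) / u ^ ρ) ?_
    fun y hy x hx hxy => hlim y hy w hw x _ (fun u _ => hx u) ray_mem hxy ray_tendsto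
  filter_upwards [eventually_gt_atTop 0] with u hu
  simpa only [smul_eq_mul, div_eq_inv_mul] using
    (hg _ (ray_mem u hu)).smul (inv_nonneg.2 (Real.rpow_nonneg hu.le ρ))

end AsymptoticCone

/-- Under Assumption 2, for every fixed `w ∈ Ξ` the limit function `gs(·, w)` is
convex on the asymptotic cone `X^∞_γ`. -/
theorem gstar_convex {n m : ℕ} (X : Set (Rn n)) (Ξ : Set (Rn m))
    (g : Rn n → Rn m → ℝ) (γ ρ : ℝ) (gs : Rn n → Rn m → ℝ)
    (hA2 : Assumption2 X Ξ g γ ρ gs) :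
    ∀ w ∈ Ξ, ∀ y₁ ∈ asymCone X γ, ∀ y₂ ∈ asymCone X γ, ∀ t ∈ Set.Icc (0 : ℝ) 1,
      t • y₁ + (1 - t) • y₂ ∈ asymCone X γ ∧
      gs (t • y₁ + (1 - t) • y₂) w ≤ t * gs y₁ w + (1 - t) * gs y₂ w := by
  obtain ⟨⟨-, -, -, -, -, hΞ, hg, -, -⟩, -, -, ⟨-, hlim⟩, -⟩ := hA2
  intro w hw y₁ hy₁ y₂ hy₂ t ⟨ht₀, ht₁⟩
  have gs_convex : ConvexOn ℝ (asymCone X γ) (fun y => gs y w) :=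
    gstar_convex_general hΞ hg hlim hw
  exact ⟨gs_convex.1 hy₁ hy₂ ht₀ (sub_nonneg.2 ht₁) (add_sub_cancel t 1),
    gs_convex.2 hy₁ hy₂ ht₀ (sub_nonneg.2 ht₁) (add_sub_cancel t 1)⟩
end
end

section
/- Suppose Assumption 1 holds with support Ξ, directional function λ and tail index α > 0, and Assumption 2 holds for X ⊆ ℝ^n, the same closed cone Ξ, g, exponents (γ, ρ), and limit function g*. Define the rate function I(y) := inf{λ(w) : w ∈ Ξ, g*(y, w) ≥ 0} for y ∈ X^∞_γ, with the convention inf ∅ = +∞. Then for every nonempty compact set K ⊆ X^∞_γ \ {0} there exist constants c > 0 and M < ∞ such that c ≤ I(y) ≤ M for all y ∈ K. -/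
open Filter Topology MeasureTheory Set

noncomputable section

/-!
Two compactness arguments on `K`, each turning a local estimate into a uniform one. Since
`gs y 0 < 0`, the tube lemma gives a radius `δ` such that, for every `y ∈ K`, any `w` admissible in
the infimum has norm at least `δ`; regular variation makes `lam` positively homogeneous of degree
`α`, so its positive minimum on the unit sphere propagates to a positive lower bound on
`{‖w‖ ≥ δ}`. For the upper bound, a point `w` with `gs y w > 0` remains admissible for all `y'`
near `y`, so `lam w` bounds the rate function near `y`, and finitely many such points serve all
of `K`.
-/

section RateFunction

variable {E F : Type*}

/-- The rate function `I(y) = inf {lam w : w ∈ Ξ, gs y w ≥ 0}`. It takes values in `EReal`, so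
that the infimum over an empty set of admissible `w` is `⊤`. -/
def rateFunction (Ξ : Set F) (lam : F → ℝ) (gs : E → F → ℝ) (y : E) : EReal :=
  ⨅ w ∈ {w ∈ Ξ | 0 ≤ gs y w}, (lam w : EReal)

theorem le_rateFunction {Ξ : Set F} {lam : F → ℝ} {gs : E → F → ℝ} {y : E} {c : ℝ}
    (h : ∀ w ∈ Ξ, 0 ≤ gs y w → c ≤ lam w) : (c : EReal) ≤ rateFunction Ξ lam gs y :=
  le_iInf₂ fun w hw ↦ EReal.coe_le_coe_iff.mpr (h w hw.1 hw.2)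

theorem rateFunction_le {Ξ : Set F} {lam : F → ℝ} {gs : E → F → ℝ} {y : E} {w : F}
    (hw : w ∈ Ξ) (hgs : 0 ≤ gs y w) : rateFunction Ξ lam gs y ≤ lam w :=
  iInf₂_le w ⟨hw, hgs⟩

theorem eventually_forall_mem_of_isCompact [TopologicalSpace E] {K : Set E} (hK : IsCompact K)
    {l : Filter F} {p : E → F → Prop} (hp : ∀ y ∈ K, ∀ᶠ x in 𝓝[K] y ×ˢ l, p x.1 x.2) :
    ∀ᶠ w in l, ∀ y ∈ K, p y w := by
  have hlocal : ∀ y ∈ K, ∀ᶠ x in l ×ˢ 𝓝 y, x.2 ∈ K → p x.2 x.1 := by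
    intro y hy
    obtain ⟨near, hnear, late, hlate, hsub⟩ := eventually_prod_iff.mp (hp y hy)
    filter_upwards [hlate.prod_mk (eventually_nhdsWithin_iff.mp hnear)] with x hx hxK
    exact hsub (hx.2 hxK) hx.1
  have hglobal : ∀ᶠ x in l ×ˢ 𝓝ˢ K, x.2 ∈ K → p x.2 x.1 := hK.mem_prod_nhdsSet_of_forall hlocal
  exact hglobal.curry.mono fun w hw y hy ↦ hw.self_of_nhdsSet y hy hy

theorem exists_real_forall_mem_le_of_isCompact [TopologicalSpace E] {K : Set E} (hK : IsCompact K)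
    {f : E → EReal} (hf : ∀ y ∈ K, ∃ M : ℝ, ∀ᶠ y' in 𝓝[K] y, f y' ≤ M) :
    ∃ M : ℝ, ∀ y ∈ K, f y ≤ M := by
  refine (eventually_forall_mem_of_isCompact hK (l := atTop) fun y hy ↦ ?_).exists
  obtain ⟨M, hM⟩ := hf y hy
  filter_upwards [hM.prod_mk (eventually_ge_atTop M)] with x hx
  exact hx.1.trans (EReal.coe_le_coe_iff.mpr hx.2)

theorem exists_rateFunction_le_of_isCompact [TopologicalSpace E] {K : Set E} (hK : IsCompact K)
    {Ξ : Set F} (lam : F → ℝ) {gs : E → F → ℝ}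
    (hcont : ∀ w ∈ Ξ, ContinuousOn (fun y ↦ gs y w) K) (hpos : ∀ y ∈ K, ∃ w ∈ Ξ, 0 < gs y w) :
    ∃ M : ℝ, ∀ y ∈ K, rateFunction Ξ lam gs y ≤ M := by
  refine exists_real_forall_mem_le_of_isCompact hK fun y hy ↦ ?_
  obtain ⟨w, hw, hgs⟩ := hpos y hy
  refine ⟨lam w, ?_⟩
  filter_upwards [(hcont w hw y hy).eventually (lt_mem_nhds hgs)] with y' hgs'
  exact rateFunction_le hw hgs'.le

theorem zero_mem_of_isClosed_of_smul_mem [TopologicalSpace F] [AddCommGroup F] [Module ℝ F]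
    [ContinuousSMul ℝ F] {Ξ : Set F} (hclosed : IsClosed Ξ) (hne : Ξ.Nonempty)
    (hcone : ∀ t : ℝ, 0 < t → ∀ z ∈ Ξ, t • z ∈ Ξ) : (0 : F) ∈ Ξ := by
  obtain ⟨z, hz⟩ := hne
  have hzero : (0 : ℝ) ∈ closure (Ioi 0) := by rw [closure_Ioi]; exact self_mem_Ici
  have hray : (0 : ℝ) • z ∈ closure Ξ :=
    map_mem_closure (f := fun t : ℝ ↦ t • z) (by fun_prop) hzero fun t ht ↦ hcone t ht z hz
  rwa [zero_smul, hclosed.closure_eq] at hray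

theorem exists_pos_le_norm_of_isCompact [TopologicalSpace E] [SeminormedAddCommGroup F]
    {K : Set E} (hK : IsCompact K) {Ξ : Set F} {gs : E → F → ℝ}
    (hcont : ∀ y ∈ K, ContinuousWithinAt (Function.uncurry gs) (K ×ˢ Ξ) (y, 0))
    (hneg : ∀ y ∈ K, gs y 0 < 0) :
    ∃ δ : ℝ, 0 < δ ∧ ∀ y ∈ K, ∀ w ∈ Ξ, 0 ≤ gs y w → δ ≤ ‖w‖ := by
  have hnear : ∀ᶠ w in 𝓝[Ξ] 0, ∀ y ∈ K, gs y w < 0 := by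
    refine eventually_forall_mem_of_isCompact hK fun y hy ↦ ?_
    rw [← nhdsWithin_prod_eq]
    exact (hcont y hy).eventually (gt_mem_nhds (hneg y hy))
  obtain ⟨δ, hδ, hball⟩ := Metric.mem_nhdsWithin_iff.mp hnear
  refine ⟨δ, hδ, fun y hy w hw hgs ↦ ?_⟩
  by_contra! hlt
  exact hgs.not_gt (hball ⟨mem_ball_zero_iff.mpr hlt, hw⟩ y hy)

section NormedSpace

variable [NormedAddCommGroup F] [NormedSpace ℝ F] [ProperSpace F]
  {Ξ : Set F} {lam : F → ℝ} {α : ℝ}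

theorem exists_pos_norm_rpow_mul_le (hclosed : IsClosed Ξ)
    (hcone : ∀ t : ℝ, 0 < t → ∀ z ∈ Ξ, t • z ∈ Ξ) (hlam : ContinuousOn lam Ξ)
    (hhom : ∀ t : ℝ, 0 < t → ∀ z ∈ Ξ, lam (t • z) = t ^ α * lam z)
    (hpos : ∀ z ∈ Ξ, ‖z‖ = 1 → 0 < lam z) :
    ∃ c : ℝ, 0 < c ∧ ∀ w ∈ Ξ, w ≠ 0 → ‖w‖ ^ α * c ≤ lam w := by
  have hcompact : IsCompact (Metric.sphere 0 1 ∩ Ξ) := (isCompact_sphere 0 1).inter_right hclosed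
  obtain ⟨c, hc, hmin⟩ := hcompact.exists_forall_le' (hlam.mono inter_subset_right)
    fun z hz ↦ hpos z hz.2 (mem_sphere_zero_iff_norm.mp hz.1)
  refine ⟨c, hc, fun w hw hw0 ↦ ?_⟩
  have hnorm : 0 < ‖w‖ := norm_pos_iff.mpr hw0
  have hunit : ‖w‖⁻¹ • w ∈ Metric.sphere 0 1 ∩ Ξ :=
    ⟨mem_sphere_zero_iff_norm.mpr (norm_smul_inv_norm (𝕜 := ℝ) hw0),
      hcone _ (inv_pos.mpr hnorm) w hw⟩
  calc ‖w‖ ^ α * c ≤ ‖w‖ ^ α * lam (‖w‖⁻¹ • w) := by gcongr; exact hmin _ hunit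
    _ = lam (‖w‖ • ‖w‖⁻¹ • w) := (hhom _ hnorm _ hunit.2).symm
    _ = lam w := by rw [smul_inv_smul₀ hnorm.ne']

theorem exists_pos_le_rateFunction_of_isCompact [TopologicalSpace E] {K : Set E}
    (hK : IsCompact K) (hclosed : IsClosed Ξ)
    (hcone : ∀ t : ℝ, 0 < t → ∀ z ∈ Ξ, t • z ∈ Ξ) (hlam : ContinuousOn lam Ξ) (hα : 0 ≤ α)
    (hhom : ∀ t : ℝ, 0 < t → ∀ z ∈ Ξ, lam (t • z) = t ^ α * lam z)
    (hpos : ∀ z ∈ Ξ, ‖z‖ = 1 → 0 < lam z) {gs : E → F → ℝ}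
    (hcont : ∀ y ∈ K, ContinuousWithinAt (Function.uncurry gs) (K ×ˢ Ξ) (y, 0))
    (hneg : ∀ y ∈ K, gs y 0 < 0) :
    ∃ c : ℝ, 0 < c ∧ ∀ y ∈ K, c ≤ rateFunction Ξ lam gs y := by
  obtain ⟨δ, hδ, hfar⟩ := exists_pos_le_norm_of_isCompact hK hcont hneg
  obtain ⟨c, hc, hgrowth⟩ := exists_pos_norm_rpow_mul_le hclosed hcone hlam hhom hpos
  refine ⟨δ ^ α * c, by positivity, fun y hy ↦ le_rateFunction fun w hw hgs ↦ ?_⟩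
  have hδw : δ ≤ ‖w‖ := hfar y hy w hw hgs
  calc δ ^ α * c ≤ ‖w‖ ^ α * c := by gcongr
    _ ≤ lam w := hgrowth w hw (norm_pos_iff.mp (hδ.trans_le hδw))

theorem rate_function_bounds_general [TopologicalSpace E] {K : Set E} (hK : IsCompact K)
    (hclosed : IsClosed Ξ) (hcone : ∀ t : ℝ, 0 < t → ∀ z ∈ Ξ, t • z ∈ Ξ)
    (hlam : ContinuousOn lam Ξ) (hα : 0 ≤ α)
    (hhom : ∀ t : ℝ, 0 < t → ∀ z ∈ Ξ, lam (t • z) = t ^ α * lam z)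
    (hpos : ∀ z ∈ Ξ, ‖z‖ = 1 → 0 < lam z) {gs : E → F → ℝ}
    (hgs : ContinuousOn (Function.uncurry gs) (K ×ˢ Ξ)) (hneg : ∀ y ∈ K, gs y 0 < 0)
    (hadm : ∀ y ∈ K, ∃ w ∈ Ξ, 0 < gs y w) :
    ∃ c M : ℝ, 0 < c ∧
      ∀ y ∈ K, c ≤ rateFunction Ξ lam gs y ∧ rateFunction Ξ lam gs y ≤ M := by
  have hzero : ∀ y ∈ K, (0 : F) ∈ Ξ := fun y hy ↦
    zero_mem_of_isClosed_of_smul_mem hclosed ((hadm y hy).imp fun _ ↦ And.left) hcone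
  obtain ⟨c, hc, hlower⟩ := exists_pos_le_rateFunction_of_isCompact hK hclosed hcone hlam hα hhom
    hpos (fun y hy ↦ hgs _ ⟨hy, hzero y hy⟩) hneg
  obtain ⟨M, hupper⟩ := exists_rateFunction_le_of_isCompact hK lam
    (fun w hw ↦ hgs.uncurry_right w hw) hadm
  exact ⟨c, M, hc, fun y hy ↦ ⟨hlower y hy, hupper y hy⟩⟩

end NormedSpace

end RateFunction

theorem MultiRegVary.apply_smul {d : ℕ} {Z : Set (Rn d)} {f : Rn d → ℝ} {h : ℝ → ℝ}
    {fstar : Rn d → ℝ} {κ : ℝ} (hf : MultiRegVary Z f h fstar) (hh : RegVary h κ)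
    (hZ : IsPosCone Z) {t : ℝ} (ht : 0 < t) {z : Rn d} (hz : z ∈ Z) :
    fstar (t • z) = t ^ κ * fstar z := by
  obtain ⟨-, -, -, hlim⟩ := hf
  obtain ⟨hh_pos, hh_lim⟩ := hh
  have htz : t • z ∈ Z := hZ t ht z hz
  have hlim_tz : Tendsto (fun u : ℝ ↦ f (u • t • z) / h u) atTop (𝓝 (fstar (t • z))) :=
    hlim _ htz (fun _ ↦ t • z) (fun _ _ ↦ htz) tendsto_const_nhds
  have hlim_z : Tendsto (fun u : ℝ ↦ f ((u * t) • z) / h (u * t)) atTop (𝓝 (fstar z)) :=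
    (hlim z hz (fun _ ↦ z) (fun _ _ ↦ hz) tendsto_const_nhds).comp
      (tendsto_id.atTop_mul_const ht)
  refine tendsto_nhds_unique hlim_tz (((hh_lim t ht).mul hlim_z).congr' ?_)
  filter_upwards [eventually_gt_atTop 0] with u hu
  rw [mul_comm, div_mul_div_cancel₀ (hh_pos _ (mul_pos hu ht)).ne', smul_smul]

/-- The rate function `I(y) = inf{lam(w) : w ∈ Ξ, gs(y, w) ≥ 0}` (with `inf ∅ = ⊤`
in `EReal`) is bounded away from `0` and from `+∞`, uniformly on every nonempty
compact subset of `X^∞_γ \ {0}`. -/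
theorem rate_function_bounds {n m : ℕ} (P : Measure (Rn m)) (Ξ : Set (Rn m))
    (Q : Rn m → ℝ) (q : ℝ → ℝ) (lam : Rn m → ℝ) (α : ℝ)
    (hA1 : Assumption1 P Ξ Q q lam α)
    (X : Set (Rn n)) (g : Rn n → Rn m → ℝ) (γ ρ : ℝ) (gs : Rn n → Rn m → ℝ)
    (hA2 : Assumption2 X Ξ g γ ρ gs)
    (K : Set (Rn n)) (hKne : K.Nonempty) (hKcpt : IsCompact K)
    (hKsub : K ⊆ asymCone X γ \ {0}) :
    ∃ c M : ℝ, 0 < c ∧ ∀ y ∈ K,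
      (c : EReal) ≤ (⨅ w ∈ {w ∈ Ξ | 0 ≤ gs y w}, (lam w : EReal)) ∧
      (⨅ w ∈ {w ∈ Ξ | 0 ≤ gs y w}, (lam w : EReal)) ≤ (M : EReal) := by
  obtain ⟨-, -, hclosed, hcone, -, -, -, hα, hq, hQ, hpos⟩ := hA1
  obtain ⟨-, -, -, ⟨hgs, -⟩, -, hA3, hA4, -⟩ := hA2
  exact rate_function_bounds_general hKcpt hclosed hcone hQ.2.2.1 hα.le
    (fun _ ht _ hz ↦ hQ.apply_smul hq hcone ht hz) hpos
    (hgs.mono (prod_mono (hKsub.trans sdiff_subset) Subset.rfl))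
    (fun y hy ↦ hA3 y (hKsub hy)) fun y hy ↦ hA4 y (hKsub hy)
end
end
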